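/- (Appendix Lemma, output-feedback version.) If additionally e_f, η : [0,∞) → ℝⁿ are continuous functions such that ė(t) = η(t) − α₁·e(t) − α₂·e_f(t) for constants α₁, α₂ > 0, and z(t) = (e(t), e_f(t), η(t)), then there exist nonnegative constants ξ₄, ξ₅, depending only on β, α₁, α₂ and the bounding constants m₂, ζ_{M1}, ζ_{C1}, ζ_{C2}, ζ_G, ζ_F, ζ_{d1}, such that for every t ≥ 0: ‖Ω(t)‖ ≤ ξ₄·Z(t) + ξ₅·Z(t)², where Z(t) = sup_{0≤σ≤t} ‖z(σ)‖. -/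

import Mathlib

open Matrix
open scoped BigOperators

/-- Euclidean norm of a vector in `Fin m → ℝ`. -/
noncomputable def eunorm {m : ℕ} (v : Fin m → ℝ) : ℝ :=
  Real.sqrt (∑ i, (v i) ^ 2)

lemma eunorm_eq {m : ℕ} (v : Fin m → ℝ) : eunorm v = ‖(WithLp.toLp 2 v : EuclideanSpace ℝ (Fin m))‖ := by
  simp [eunorm, EuclideanSpace.norm_eq]

lemma eunorm_nonneg {m : ℕ} (v : Fin m → ℝ) : 0 ≤ eunorm v := Real.sqrt_nonneg _

lemma eunorm_zero {m : ℕ} : eunorm (0 : Fin m → ℝ) = 0 := by simp [eunorm]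

lemma eunorm_add {m : ℕ} (v w : Fin m → ℝ) : eunorm (v + w) ≤ eunorm v + eunorm w := by
  simp only [eunorm_eq, WithLp.toLp_add]; exact norm_add_le _ _

lemma eunorm_sub {m : ℕ} (v w : Fin m → ℝ) : eunorm (v - w) ≤ eunorm v + eunorm w := by
  simp only [eunorm_eq, WithLp.toLp_sub]; exact norm_sub_le _ _

lemma eunorm_neg {m : ℕ} (v : Fin m → ℝ) : eunorm (-v) = eunorm v := by
  simp [eunorm]

lemma eunorm_sub_comm {m : ℕ} (v w : Fin m → ℝ) : eunorm (v - w) = eunorm (w - v) := by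
  rw [← eunorm_neg, neg_sub]

lemma eunorm_smul {m : ℕ} (c : ℝ) (v : Fin m → ℝ) : eunorm (c • v) = |c| * eunorm v := by
  simp only [eunorm_eq, WithLp.toLp_smul, norm_smul, Real.norm_eq_abs]

lemma eunorm_sq {m : ℕ} (v : Fin m → ℝ) : eunorm v ^ 2 = v ⬝ᵥ v := by
  rw [eunorm, Real.sq_sqrt (Finset.sum_nonneg fun i _ => sq_nonneg _)]
  simp [dotProduct, sq]

lemma dot_le {m : ℕ} (v w : Fin m → ℝ) : v ⬝ᵥ w ≤ eunorm v * eunorm w := by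
  have h := real_inner_le_norm (WithLp.toLp 2 w : EuclideanSpace ℝ (Fin m)) (WithLp.toLp 2 v)
  rw [← eunorm_eq, ← eunorm_eq, EuclideanSpace.inner_eq_star_dotProduct] at h
  simp at h
  linarith

lemma eunorm_transpose {m : ℕ} (A : Matrix (Fin m) (Fin m) ℝ) (K : ℝ) (hK : 0 ≤ K)
    (h : ∀ v, eunorm (A.mulVec v) ≤ K * eunorm v) (v : Fin m → ℝ) :
    eunorm (Aᵀ.mulVec v) ≤ K * eunorm v := by
  set w := Aᵀ.mulVec v with hw
  have h1 : eunorm w ^ 2 ≤ eunorm v * (K * eunorm w) := by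
    calc eunorm w ^ 2 = w ⬝ᵥ w := eunorm_sq w
      _ = v ⬝ᵥ A.mulVec w := by
          rw [Matrix.dotProduct_mulVec v A w, ← Matrix.mulVec_transpose A v]
      _ ≤ eunorm v * eunorm (A.mulVec w) := dot_le _ _
      _ ≤ _ := mul_le_mul_of_nonneg_left (h w) (eunorm_nonneg v)
  rcases (eunorm_nonneg w).eq_or_lt with h0 | h0
  · rw [← h0]; exact mul_nonneg hK (eunorm_nonneg v)
  · nlinarith

lemma filter_bound {m : ℕ} (β t H : ℝ) (hβ : 0 < β) (ht : 0 ≤ t) (hH : 0 ≤ H)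
    (F : ℝ → Fin m → ℝ) (hF : ∀ σ ∈ Set.Icc 0 t, eunorm (F σ) ≤ H) :
    eunorm (∫ σ in (0:ℝ)..t, (β * Real.exp (-β * (t - σ))) • F σ) ≤ H := by
  have e1 : (WithLp.toLp 2 (∫ σ in (0:ℝ)..t, (β * Real.exp (-β * (t - σ))) • F σ) :
      EuclideanSpace ℝ (Fin m)) =
      ∫ σ in (0:ℝ)..t, (WithLp.toLp 2 ((β * Real.exp (-β * (t - σ))) • F σ) :
        EuclideanSpace ℝ (Fin m)) := by
    rw [intervalIntegral.integral_of_le ht, intervalIntegral.integral_of_le ht]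
    exact ((EuclideanSpace.equiv (Fin m) ℝ).symm.integral_comp_comm _).symm
  rw [eunorm_eq, e1]
  have hd : ∀ σ : ℝ, HasDerivAt (fun σ => H * Real.exp (-β * (t - σ)))
      (β * Real.exp (-β * (t - σ)) * H) σ := by
    intro σ
    have h1 : HasDerivAt (fun σ : ℝ => -β * (t - σ)) (-β * (0 - 1)) σ :=
      ((hasDerivAt_const σ t).sub (hasDerivAt_id σ)).const_mul (-β)
    exact (h1.exp.const_mul H).congr_deriv (by ring)
  have hi : IntervalIntegrable (fun σ => β * Real.exp (-β * (t - σ)) * H)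
      MeasureTheory.volume 0 t := (by fun_prop : Continuous _).intervalIntegrable _ _
  have h2 := intervalIntegral.norm_integral_le_of_norm_le (μ := MeasureTheory.volume)
    (f := fun σ => (WithLp.toLp 2 ((β * Real.exp (-β * (t - σ))) • F σ) :
        EuclideanSpace ℝ (Fin m))) ht
    (Filter.Eventually.of_forall (fun σ hσ => by
      rw [← eunorm_eq, eunorm_smul, abs_of_nonneg (by positivity)]
      exact mul_le_mul_of_nonneg_left (hF σ ⟨hσ.1.le, hσ.2⟩) (by positivity))) hi
  refine h2.trans ?_
  rw [intervalIntegral.integral_eq_sub_of_hasDerivAt (fun σ _ => hd σ) hi]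
  have : 0 ≤ H * Real.exp (-β * (t - 0)) := by positivity
  simp only [sub_self, mul_zero, Real.exp_zero, mul_one]
  linarith

lemma h_bound {n : ℕ} (m₂ ζM1 D Z c : ℝ) (hc : 0 ≤ c)
    (hm : 0 ≤ m₂) (hM1 : 0 ≤ ζM1) (hD : 0 ≤ D) (hZ : 0 ≤ Z)
    (A B : Matrix (Fin n) (Fin n) ℝ) (x y : Fin n → ℝ)
    (hy : eunorm y ≤ D) (hxy : eunorm (x - y) ≤ c * Z)
    (hA : ∀ v, eunorm (A.mulVec v) ≤ m₂ * eunorm v)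
    (hAB : ∀ v, eunorm ((A - B).mulVec v) ≤ ζM1 * Z * eunorm v) :
    eunorm (A.mulVec x - B.mulVec y) ≤ (ζM1 * D + m₂ * c) * Z := by
  have e : A.mulVec x - B.mulVec y = (A - B).mulVec y + A.mulVec (x - y) := by
    rw [Matrix.sub_mulVec, Matrix.mulVec_sub]; abel
  rw [e]
  have h1 : ζM1 * Z * eunorm y ≤ ζM1 * Z * D := by gcongr
  have h2 : m₂ * eunorm (x - y) ≤ m₂ * (c * Z) := by gcongr
  linarith [eunorm_add ((A - B).mulVec y) (A.mulVec (x - y)), hAB y, hA (x - y)]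

lemma c_bound {n : ℕ} (K1 K2 D Z c : ℝ) (hc : 0 ≤ c)
    (hK1 : 0 ≤ K1) (hK2 : 0 ≤ K2) (hD : 0 ≤ D) (hZ : 0 ≤ Z)
    (A B : (Fin n → ℝ) → Matrix (Fin n) (Fin n) ℝ) (x y : Fin n → ℝ)
    (lA : IsLinearMap ℝ A)
    (hy : eunorm y ≤ D) (hxy : eunorm (x - y) ≤ c * Z)
    (hA : ∀ w v, eunorm ((A w).mulVec v) ≤ K1 * eunorm w * eunorm v)
    (hAB : ∀ w v, eunorm ((A w - B w).mulVec v) ≤ K2 * Z * eunorm w * eunorm v) :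
    eunorm ((A x)ᵀ.mulVec x - (B y)ᵀ.mulVec y) ≤
      (K2 * D ^ 2 + 2 * K1 * D * c) * Z + (K1 * c ^ 2) * Z ^ 2 := by
  set d := x - y with hd
  have hx : x = y + d := by rw [hd]; abel
  have hAt : ∀ w v, eunorm ((A w)ᵀ.mulVec v) ≤ K1 * eunorm w * eunorm v := fun w v =>
    eunorm_transpose _ _ (mul_nonneg hK1 (eunorm_nonneg w)) (hA w) v
  have hABt : ∀ w v, eunorm ((A w - B w)ᵀ.mulVec v) ≤ K2 * Z * eunorm w * eunorm v := fun w v =>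
    eunorm_transpose _ _ (mul_nonneg (mul_nonneg hK2 hZ) (eunorm_nonneg w)) (hAB w) v
  -- A(y+d)ᵀ(y+d) - B(y)ᵀy = ΔC(y)ᵀy + A(y)ᵀd + A(d)ᵀy + A(d)ᵀd
  have e : (A x)ᵀ.mulVec x - (B y)ᵀ.mulVec y = (A y - B y)ᵀ.mulVec y + (A y)ᵀ.mulVec d
      + (A d)ᵀ.mulVec y + (A d)ᵀ.mulVec d := by
    rw [hx, lA.map_add]
    simp only [Matrix.transpose_add, Matrix.transpose_sub, Matrix.add_mulVec, Matrix.sub_mulVec,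
      Matrix.mulVec_add]
    abel
  rw [e]
  have ny := eunorm_nonneg y
  have nd := eunorm_nonneg d
  have h1 : K2 * Z * eunorm y * eunorm y ≤ K2 * Z * D * D := by gcongr
  have h2 : K1 * eunorm y * eunorm d ≤ K1 * D * (c * Z) := by gcongr
  have h3 : K1 * eunorm d * eunorm y ≤ K1 * (c * Z) * D := by gcongr
  have h4 : K1 * eunorm d * eunorm d ≤ K1 * (c * Z) * (c * Z) := by gcongr
  have t1 := eunorm_add ((A y - B y)ᵀ.mulVec y + (A y)ᵀ.mulVec d + (A d)ᵀ.mulVec y)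
    ((A d)ᵀ.mulVec d)
  have t2 := eunorm_add ((A y - B y)ᵀ.mulVec y + (A y)ᵀ.mulVec d) ((A d)ᵀ.mulVec y)
  have t3 := eunorm_add ((A y - B y)ᵀ.mulVec y) ((A y)ᵀ.mulVec d)
  nlinarith [hABt y y, hAt y d, hAt d y, hAt d d]

/-- Appendix Lemma, output-feedback version. If `e_f, η` are
continuous functions with `ė = η - α₁ e - α₂ e_f` for constants `α₁, α₂ > 0`,
and `z = (e, e_f, η)`, then there exist nonnegative constants `ξ₄, ξ₅`,
depending only on `β`, `α₁`, `α₂` and the bounding constants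
`m₂, ζM1, ζC1, ζC2, ζG, ζF, ζd1`, such that for every `t ≥ 0`,
`‖Ω(t)‖ ≤ ξ₄ Z(t) + ξ₅ Z(t)²` where `Z(t) = sup_{0≤σ≤t} ‖z(σ)‖`. -/
theorem appendix_lemma_ofb
    (β α₁ α₂ m₂ ζM1 ζC1 ζC2 ζG ζF ζd1 : ℝ)
    (hβ : 0 < β) (hα₁ : 0 < α₁) (hα₂ : 0 < α₂) :
    ∃ ξ₄ ξ₅ : ℝ, 0 ≤ ξ₄ ∧ 0 ≤ ξ₅ ∧
      ∀ (n : ℕ) (q qd q' qd' ef η : ℝ → Fin n → ℝ)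
        (Mm : (Fin n → ℝ) → Matrix (Fin n) (Fin n) ℝ)
        (Cc : (Fin n → ℝ) → (Fin n → ℝ) → Matrix (Fin n) (Fin n) ℝ)
        (G : (Fin n → ℝ) → Fin n → ℝ)
        (Fd : Matrix (Fin n) (Fin n) ℝ)
        (Ω : ℝ → Fin n → ℝ),
        -- trajectories and their derivatives
        (∀ t, HasDerivAt q (q' t) t) → (∀ t, HasDerivAt qd (qd' t) t) →
        Continuous q' → Continuous qd' →
        -- surrogate signals are continuous
        Continuous ef → Continuous η →
        -- initial rest conditions
        q' 0 = 0 → qd' 0 = 0 →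
        -- bounded desired velocity
        (∀ t, 0 ≤ t → eunorm (qd' t) ≤ ζd1) →
        -- ė = η - α₁ e - α₂ e_f, with e = q_d - q
        (∀ t, qd' t - q' t = η t - α₁ • (qd t - q t) - α₂ • ef t) →
        -- induced-norm bounds on the dynamic terms
        (∀ a v, eunorm ((Mm a).mulVec v) ≤ m₂ * eunorm v) →
        (∀ a b v, eunorm ((Mm a - Mm b).mulVec v) ≤ ζM1 * eunorm (a - b) * eunorm v) →
        (∀ a w v, eunorm ((Cc a w).mulVec v) ≤ ζC1 * eunorm w * eunorm v) →
        (∀ a b w v, eunorm ((Cc a w - Cc b w).mulVec v) ≤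
          ζC2 * eunorm (a - b) * eunorm w * eunorm v) →
        -- C is linear in its second argument and satisfies the switching property
        (∀ a, IsLinearMap ℝ (Cc a)) →
        (∀ a ν ξ, (Cc a ν).mulVec ξ = (Cc a ξ).mulVec ν) →
        (∀ a b, eunorm (G a - G b) ≤ ζG * eunorm (a - b)) →
        (∀ v, eunorm (Fd.mulVec v) ≤ ζF * eunorm v) →
        -- (d/dt)[M(q(t))] = C(q, q̇) + C(q, q̇)ᵀ along any C¹ curve
        (∀ (c c' : ℝ → Fin n → ℝ), (∀ s, HasDerivAt c (c' s) s) →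
          ∀ s i j, HasDerivAt (fun u => Mm (c u) i j)
            ((Cc (c s) (c' s) + (Cc (c s) (c' s))ᵀ) i j) s) →
        -- definition of Ω via the filter f(t) = β exp(-βt):
        -- Ω(t) = ∫₀ᵗ f'(t-σ) h(σ) dσ + f(0) h(t) - f(t) h(0) + ∫₀ᵗ f(t-σ) g(σ) dσ
        (∀ t, Ω t =
          (∫ σ in (0:ℝ)..t, (-β ^ 2 * Real.exp (-β * (t - σ))) •
              ((Mm (q σ)).mulVec (q' σ) - (Mm (qd σ)).mulVec (qd' σ)))
          + β • ((Mm (q t)).mulVec (q' t) - (Mm (qd t)).mulVec (qd' t))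
          - (β * Real.exp (-β * t)) •
              ((Mm (q 0)).mulVec (q' 0) - (Mm (qd 0)).mulVec (qd' 0))
          + ∫ σ in (0:ℝ)..t, (β * Real.exp (-β * (t - σ))) •
              (-((Cc (q σ) (q' σ) + (Cc (q σ) (q' σ))ᵀ).mulVec (q' σ))
                + (Cc (qd σ) (qd' σ) + (Cc (qd σ) (qd' σ))ᵀ).mulVec (qd' σ)
                + (Cc (q σ) (q' σ)).mulVec (q' σ)
                - (Cc (qd σ) (qd' σ)).mulVec (qd' σ)
                + G (q σ) - G (qd σ) + Fd.mulVec (q' σ - qd' σ))) →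
        -- conclusion, with Z(t) = sup_{0≤σ≤t} ‖(e(σ), e_f(σ), η(σ))‖
        ∀ t, 0 ≤ t →
          eunorm (Ω t) ≤
            ξ₄ * sSup ((fun σ => Real.sqrt ((eunorm (qd σ - q σ)) ^ 2 +
                  (eunorm (ef σ)) ^ 2 + (eunorm (η σ)) ^ 2)) '' Set.Icc 0 t)
            + ξ₅ * (sSup ((fun σ => Real.sqrt ((eunorm (qd σ - q σ)) ^ 2 +
                  (eunorm (ef σ)) ^ 2 + (eunorm (η σ)) ^ 2)) '' Set.Icc 0 t)) ^ 2 := by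
  have hc0 : 0 ≤ 1 + α₁ + α₂ := by positivity
  obtain ⟨c, hc⟩ : ∃ c, c = 1 + α₁ + α₂ := ⟨_, rfl⟩
  rw [← hc] at hc0
  refine ⟨2 * β * (|ζM1| * |ζd1| + |m₂| * c) + (|ζC2| * |ζd1| ^ 2 + 2 * |ζC1| * |ζd1| * c)
    + |ζG| + |ζF| * c, |ζC1| * c ^ 2, by positivity, by positivity, ?_⟩
  intro n q qd q' qd' ef η Mm Cc G Fd Ω hq hqd _ _ hef hη hq0 hqd0 hv he hM hM1 hC hC2 hlin _ hG hF
    _ hΩ t ht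
  have eun_cont : Continuous (eunorm : (Fin n → ℝ) → ℝ) := by
    unfold eunorm; fun_prop
  have cq : Continuous q := continuous_iff_continuousAt.2 fun s => (hq s).continuousAt
  have cqd : Continuous qd := continuous_iff_continuousAt.2 fun s => (hqd s).continuousAt
  set zf : ℝ → ℝ := fun σ => Real.sqrt ((eunorm (qd σ - q σ)) ^ 2 +
                  (eunorm (ef σ)) ^ 2 + (eunorm (η σ)) ^ 2) with hzf
  have czf : Continuous zf := by
    have h1 := eun_cont.comp (cqd.sub cq)
    have h2 := eun_cont.comp hef
    have h3 := eun_cont.comp hη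
    exact (((h1.pow 2).add (h2.pow 2)).add (h3.pow 2)).sqrt
  set Z := sSup (zf '' Set.Icc 0 t) with hZdef
  have hbdd : BddAbove (zf '' Set.Icc 0 t) := (isCompact_Icc.image czf).bddAbove
  have hzZ : ∀ σ ∈ Set.Icc 0 t, zf σ ≤ Z := fun σ hσ => le_csSup hbdd ⟨σ, hσ, rfl⟩
  have hZ : 0 ≤ Z := (Real.sqrt_nonneg _).trans (hzZ 0 ⟨le_rfl, ht⟩)
  have hE : ∀ σ ∈ Set.Icc 0 t, eunorm (q σ - qd σ) ≤ Z := fun σ hσ => by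
    rw [eunorm_sub_comm]
    refine le_trans (Real.le_sqrt_of_sq_le ?_) (hzZ σ hσ)
    nlinarith [sq_nonneg (eunorm (ef σ)), sq_nonneg (eunorm (η σ))]
  have hEf : ∀ σ ∈ Set.Icc 0 t, eunorm (ef σ) ≤ Z := fun σ hσ => by
    refine le_trans (Real.le_sqrt_of_sq_le ?_) (hzZ σ hσ)
    nlinarith [sq_nonneg (eunorm (qd σ - q σ)), sq_nonneg (eunorm (η σ))]
  have hEη : ∀ σ ∈ Set.Icc 0 t, eunorm (η σ) ≤ Z := fun σ hσ => by
    refine le_trans (Real.le_sqrt_of_sq_le ?_) (hzZ σ hσ)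
    nlinarith [sq_nonneg (eunorm (ef σ)), sq_nonneg (eunorm (qd σ - q σ))]
  have hd : ∀ σ ∈ Set.Icc 0 t, eunorm (q' σ - qd' σ) ≤ c * Z := fun σ hσ => by
    rw [eunorm_sub_comm, he σ]
    have h1 := eunorm_sub (η σ - α₁ • (qd σ - q σ)) (α₂ • ef σ)
    have h2 := eunorm_sub (η σ) (α₁ • (qd σ - q σ))
    rw [eunorm_smul, abs_of_pos hα₂] at h1
    rw [eunorm_smul, abs_of_pos hα₁, eunorm_sub_comm (qd σ)] at h2
    have h3 := mul_le_mul_of_nonneg_left (hE σ hσ) hα₁.le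
    have h4 := mul_le_mul_of_nonneg_left (hEf σ hσ) hα₂.le
    rw [hc]
    linarith [hEη σ hσ]
  have hy : ∀ σ ∈ Set.Icc 0 t, eunorm (qd' σ) ≤ |ζd1| := fun σ hσ =>
    (hv σ hσ.1).trans (le_abs_self _)
  have hh : ∀ σ ∈ Set.Icc 0 t, eunorm ((Mm (q σ)).mulVec (q' σ) - (Mm (qd σ)).mulVec (qd' σ)) ≤
      (|ζM1| * |ζd1| + |m₂| * c) * Z := fun σ hσ => by
    refine h_bound |m₂| |ζM1| |ζd1| Z c hc0 (abs_nonneg _) (abs_nonneg _) (abs_nonneg _) hZ _ _ _ _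
      (hy σ hσ) (hd σ hσ) (fun v => (hM _ v).trans ?_) (fun v => (hM1 _ _ v).trans ?_)
    · exact mul_le_mul_of_nonneg_right (le_abs_self _) (eunorm_nonneg v)
    · exact mul_le_mul_of_nonneg_right (mul_le_mul (le_abs_self _) (hE σ hσ) (eunorm_nonneg _)
        (abs_nonneg _)) (eunorm_nonneg v)
  set H := (|ζM1| * |ζd1| + |m₂| * c) * Z with hH
  have hH0 : 0 ≤ H := by positivity
  have hg : ∀ σ ∈ Set.Icc 0 t, eunorm (-((Cc (q σ) (q' σ) + (Cc (q σ) (q' σ))ᵀ).mulVec (q' σ))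
                + (Cc (qd σ) (qd' σ) + (Cc (qd σ) (qd' σ))ᵀ).mulVec (qd' σ)
                + (Cc (q σ) (q' σ)).mulVec (q' σ)
                - (Cc (qd σ) (qd' σ)).mulVec (qd' σ)
                + G (q σ) - G (qd σ) + Fd.mulVec (q' σ - qd' σ)) ≤
      ((|ζC2| * |ζd1| ^ 2 + 2 * |ζC1| * |ζd1| * c) * Z + (|ζC1| * c ^ 2) * Z ^ 2)
      + |ζG| * Z + |ζF| * (c * Z) := fun σ hσ => by
    have e : -((Cc (q σ) (q' σ) + (Cc (q σ) (q' σ))ᵀ).mulVec (q' σ))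
                + (Cc (qd σ) (qd' σ) + (Cc (qd σ) (qd' σ))ᵀ).mulVec (qd' σ)
                + (Cc (q σ) (q' σ)).mulVec (q' σ)
                - (Cc (qd σ) (qd' σ)).mulVec (qd' σ)
                + G (q σ) - G (qd σ) + Fd.mulVec (q' σ - qd' σ) =
        -((Cc (q σ) (q' σ))ᵀ.mulVec (q' σ) - (Cc (qd σ) (qd' σ))ᵀ.mulVec (qd' σ))
        + (G (q σ) - G (qd σ)) + Fd.mulVec (q' σ - qd' σ) := by
      simp only [Matrix.add_mulVec]; abel
    rw [e]
    refine (eunorm_add _ _).trans (add_le_add ((eunorm_add _ _).trans (add_le_add ?_ ?_)) ?_)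
    · rw [eunorm_neg]
      refine c_bound |ζC1| |ζC2| |ζd1| Z c hc0 (abs_nonneg _) (abs_nonneg _) (abs_nonneg _) hZ
        (Cc (q σ)) (Cc (qd σ)) _ _ (hlin _) (hy σ hσ) (hd σ hσ)
        (fun w v => (hC _ w v).trans ?_) (fun w v => (hC2 _ _ w v).trans ?_)
      · exact mul_le_mul_of_nonneg_right (mul_le_mul_of_nonneg_right (le_abs_self _)
          (eunorm_nonneg w)) (eunorm_nonneg v)
      · exact mul_le_mul_of_nonneg_right (mul_le_mul_of_nonneg_right
          (mul_le_mul (le_abs_self _) (hE σ hσ) (eunorm_nonneg _)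
          (abs_nonneg _)) (eunorm_nonneg w)) (eunorm_nonneg v)
    · exact (hG _ _).trans (mul_le_mul (le_abs_self _) (hE σ hσ) (eunorm_nonneg _) (abs_nonneg _))
    · exact (hF _).trans (mul_le_mul (le_abs_self _) (hd σ hσ) (eunorm_nonneg _) (abs_nonneg _))
  have I2 := filter_bound β t _ hβ ht (by positivity) _ hg
  have I1 := filter_bound β t (β * H) hβ ht (by positivity)
    (fun σ => (-β) • ((Mm (q σ)).mulVec (q' σ) - (Mm (qd σ)).mulVec (qd' σ))) (fun σ hσ => by
      rw [eunorm_smul, abs_neg, abs_of_pos hβ]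
      exact mul_le_mul_of_nonneg_left (hh σ hσ) hβ.le)
  have I1' : eunorm (∫ σ in (0:ℝ)..t, (-β ^ 2 * Real.exp (-β * (t - σ))) •
              ((Mm (q σ)).mulVec (q' σ) - (Mm (qd σ)).mulVec (qd' σ))) ≤ β * H := by
    refine le_of_eq_of_le ?_ I1
    congr 2
    funext σ
    rw [smul_smul]
    congr 1
    ring
  have I3 : eunorm (β • ((Mm (q t)).mulVec (q' t) - (Mm (qd t)).mulVec (qd' t))) ≤ β * H := by
    rw [eunorm_smul, abs_of_pos hβ]
    exact mul_le_mul_of_nonneg_left (hh t ⟨ht, le_rfl⟩) hβ.le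
  have z0 : (β * Real.exp (-β * t)) •
      ((Mm (q 0)).mulVec (q' 0) - (Mm (qd 0)).mulVec (qd' 0)) = 0 := by
    rw [hq0, hqd0]; simp
  rw [hΩ t, z0, sub_zero]
  refine (eunorm_add _ _).trans ((add_le_add ((eunorm_add _ _).trans (add_le_add I1' I3)) I2).trans
    (le_of_eq ?_))
  rw [hH]
  ring
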